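/- (Corollary 1, finding an ε-approximate stationary point.) In the over-the-air federated PG model, suppose σ_h² ≤ (N+1)·m_h² and 0 < α ≤ 1/(m_h·L), and set Λ = M·(N+1)·m_h² − (M−1)·σ_h². Let ε > 0. If additionally 3·σ_h²·V² ≤ Λ·ε, 3·M·σ̄² ≤ N·Λ·ε, and K is an integer with K ≥ 6·M·N·m_h·(J(θ^0) − J*)/(α·Λ·ε) and K ≥ 1, then (1/K)·Σ_{k=0}^{K−1} E[‖∇J(θ^k)‖²] ≤ ε; i.e., the algorithm reaches an ε-approximate stationary point on average. -/

import Mathlib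

open MeasureTheory ProbabilityTheory Gradient

/-- The family `{h_i}_i ∪ {X_{i,m}}_{i,m} ∪ {n}` combined into a single family of random
variables with common codomain `ℝ × ℝ^d`; each member generates exactly the σ-algebra of the
corresponding original random variable, so (conditional) mutual independence of this family is
equivalent to (conditional) mutual independence of the original family. -/
def otaFam {d N M : ℕ} {Ω : Type*}
    (h : Fin N → Ω → ℝ) (X : Fin N → Fin M → Ω → EuclideanSpace ℝ (Fin d))
    (n : Ω → EuclideanSpace ℝ (Fin d)) :
    Fin N ⊕ (Fin N × Fin M) ⊕ Unit → Ω → ℝ × EuclideanSpace ℝ (Fin d)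
  | Sum.inl i => fun ω => (h i ω, 0)
  | Sum.inr (Sum.inl (i, m)) => fun ω => (0, X i m ω)
  | Sum.inr (Sum.inr _) => fun ω => (0, n ω)



theorem ota_swap {Ω α ι β : Type*} [Finite ι] {mα : MeasurableSpace α} {mΩ : MeasurableSpace Ω}
    [MeasurableSpace β] [MeasurableSpace.CountablyGenerated β]
    (κ : Kernel α Ω) (μ : Measure α) (f : ι → Ω → β) (hf : ∀ i, Measurable (f i))
    (hind : Kernel.iIndepFun f κ μ) : ∀ᵐ a ∂μ, iIndepFun f (κ a) := by
  classical
  cases nonempty_fintype ι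
  set C : Set (Set β) := generateSetAlgebra (MeasurableSpace.countableGeneratingSet β) with hC
  have hCc : C.Countable :=
    countable_generateSetAlgebra MeasurableSpace.countable_countableGeneratingSet
  have hgen : MeasurableSpace.generateFrom C = ‹MeasurableSpace β› := by
    rw [hC, generateFrom_generateSetAlgebra_eq,
      MeasurableSpace.generateFrom_countableGeneratingSet]
  have hpi : IsPiSystem C := fun s hs t ht _ =>
    isSetAlgebra_generateSetAlgebra.inter_mem hs ht
  have hCm : ∀ s ∈ C, MeasurableSet s := fun s hs => by
    rw [← hgen]; exact MeasurableSpace.measurableSet_generateFrom hs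
  rw [Kernel.iIndepFun_iff_measure_inter_preimage_eq_mul] at hind
  have : Countable C := hCc.to_subtype
  have key : ∀ᵐ a ∂μ, ∀ (S : Finset ι) (s : ι → C),
      κ a (⋂ i ∈ S, (f i) ⁻¹' (s i : Set β)) = ∏ i ∈ S, κ a ((f i) ⁻¹' (s i : Set β)) := by
    rw [ae_all_iff]; intro S
    rw [ae_all_iff]; intro s
    exact hind S (fun i _ => hCm _ (s i).2)
  filter_upwards [key] with a ha
  rw [iIndepFun_iff_iIndep]
  refine iIndepSets.iIndep (fun i => (hf i).comap_le)
    (fun i => (Set.preimage (f i)) '' C) (fun i => ?_) (fun i => ?_) ?_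
  · have := hpi.comap (f i)
    simpa [Set.image] using this
  · rw [← MeasurableSpace.comap_generateFrom, hgen]
  · rw [iIndepSets_iff]
    intro S g hg
    have hg' : ∀ i, ∃ c : C, i ∈ S → (f i) ⁻¹' (c : Set β) = g i := by
      intro i
      by_cases hi : i ∈ S
      · obtain ⟨c, hc, hcg⟩ := hg i hi
        exact ⟨⟨c, hc⟩, fun _ => hcg⟩
      · exact ⟨⟨Set.univ, isSetAlgebra_generateSetAlgebra.univ_mem⟩, fun h => absurd h hi⟩
    choose c hc using hg'
    have := ha S c
    rw [Set.iInter₂_congr hc, Finset.prod_congr rfl (fun i hi => by rw [hc i hi])] at this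
    exact this

theorem ota_descent {E : Type*} [NormedAddCommGroup E] [InnerProductSpace ℝ E] [CompleteSpace E]
    (J : E → ℝ) (hJ : Differentiable ℝ J) (L : ℝ)
    (hLip : ∀ x y : E, ‖gradient J x - gradient J y‖ ≤ L * ‖x - y‖) (x u : E) :
    J (x + u) ≤ J x + inner ℝ (gradient J x) u + L / 2 * ‖u‖ ^ 2 := by
  set φ : ℝ → ℝ := fun t => J (x + t • u) - t * inner ℝ (gradient J x) u - L / 2 * t ^ 2 * ‖u‖ ^ 2
    with hφ
  have hd : ∀ t, HasDerivAt φ (inner ℝ (gradient J (x + t • u)) u - inner ℝ (gradient J x) u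
      - L * t * ‖u‖ ^ 2) t := by
    intro t
    have h1 : HasDerivAt (fun t : ℝ => x + t • u) u t := by
      simpa using ((hasDerivAt_id t).smul_const u).const_add x
    have h2 := ((hJ (x + t • u)).hasGradientAt.hasFDerivAt).comp_hasDerivAt t h1
    have h3 : HasDerivAt (fun t : ℝ => J (x + t • u)) (inner ℝ (gradient J (x + t • u)) u) t := by
      simpa using! h2
    have h4 := (h3.sub ((hasDerivAt_id t).mul_const (inner ℝ (gradient J x) u))).sub
      ((((hasDerivAt_id t).pow 2).const_mul (L / 2)).mul_const (‖u‖ ^ 2))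
    convert! h4 using 1
    simp only [id_eq]; push_cast; ring
  have hanti : AntitoneOn φ (Set.Icc 0 1) := by
    refine antitoneOn_of_deriv_nonpos (convex_Icc 0 1)
      (fun t _ => (hd t).continuousAt.continuousWithinAt)
      (fun t _ => (hd t).differentiableAt.differentiableWithinAt) ?_
    intro t ht
    rw [interior_Icc] at ht
    rw [(hd t).deriv, ← inner_sub_left]
    have h1 := real_inner_le_norm (gradient J (x + t • u) - gradient J x) u
    have h2 := hLip (x + t • u) x
    rw [add_sub_cancel_left, norm_smul, Real.norm_of_nonneg ht.1.le] at h2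
    have h3 := mul_le_mul_of_nonneg_right h2 (norm_nonneg u)
    nlinarith
  have := hanti (Set.left_mem_Icc.2 zero_le_one) (Set.right_mem_Icc.2 zero_le_one) zero_le_one
  simp only [hφ, one_smul, zero_smul, add_zero] at this
  linarith

theorem ota_int_inner {Ω E : Type*} [MeasurableSpace Ω] [NormedAddCommGroup E]
    [InnerProductSpace ℝ E]
    (ν : Measure Ω) (Y Z : Ω → E) (hY : MemLp Y 2 ν) (hZ : MemLp Z 2 ν) :
    Integrable (fun ω => (inner ℝ (Y ω) (Z ω) : ℝ)) ν := by
  have h := hY.norm.integrable_mul hZ.norm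
  refine h.mono (hY.1.inner hZ.1) (Filter.Eventually.of_forall fun ω => ?_)
  have := norm_inner_le_norm (𝕜 := ℝ) (Y ω) (Z ω)
  simpa using this

theorem ota_inner {Ω E : Type*} [MeasurableSpace Ω] [NormedAddCommGroup E] [InnerProductSpace ℝ E]
    [CompleteSpace E] [MeasurableSpace E] [BorelSpace E]
    (ν : Measure Ω) [IsProbabilityMeasure ν] (Y Z : Ω → E) (hY : MemLp Y 2 ν) (hZ : MemLp Z 2 ν)
    (hYZ : IndepFun Y Z ν) :
    ∫ ω, inner ℝ (Y ω) (Z ω) ∂ν = inner ℝ (∫ ω, Y ω ∂ν) (∫ ω, Z ω ∂ν) := by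
  exact hYZ.integral_bilin (hY.integrable one_le_two) (hZ.integrable one_le_two) (innerSL ℝ)

theorem ota_sumsq {Ω E ι : Type*} [MeasurableSpace Ω] [NormedAddCommGroup E]
    [InnerProductSpace ℝ E] [DecidableEq ι]
    [CompleteSpace E] [MeasurableSpace E] [BorelSpace E]
    (ν : Measure Ω) [IsProbabilityMeasure ν] (s : Finset ι) (Y : ι → Ω → E)
    (hY : ∀ i ∈ s, MemLp (Y i) 2 ν) (hi : ∀ i ∈ s, ∀ j ∈ s, i ≠ j → IndepFun (Y i) (Y j) ν)
    (g : E) (hg : ∀ i ∈ s, ∫ ω, Y i ω ∂ν = g) (B : ℝ) (hB : ∀ i ∈ s, ∫ ω, ‖Y i ω‖ ^ 2 ∂ν ≤ B) :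
    ∫ ω, ‖∑ i ∈ s, Y i ω‖ ^ 2 ∂ν ≤ s.card * B + s.card * (s.card - 1) * ‖g‖ ^ 2 := by
  have hint : ∀ i ∈ s, ∀ j ∈ s, Integrable (fun ω => (inner ℝ (Y i ω) (Y j ω) : ℝ)) ν :=
    fun i hi j hj => ota_int_inner ν _ _ (hY i hi) (hY j hj)
  have h1 : ∫ ω, ‖∑ i ∈ s, Y i ω‖ ^ 2 ∂ν
      = ∑ i ∈ s, ∑ j ∈ s, ∫ ω, (inner ℝ (Y i ω) (Y j ω) : ℝ) ∂ν := by
    simp_rw [← real_inner_self_eq_norm_sq, sum_inner, inner_sum]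
    rw [integral_finsetSum _ (fun i hi => integrable_finsetSum _ (fun j hj => hint i hi j hj))]
    refine Finset.sum_congr rfl fun i hi => ?_
    rw [integral_finsetSum _ (fun j hj => hint i hi j hj)]
  rw [h1]
  have h2 : ∀ i ∈ s, ∑ j ∈ s, ∫ ω, (inner ℝ (Y i ω) (Y j ω) : ℝ) ∂ν
      ≤ B + (s.card - 1) * ‖g‖ ^ 2 := by
    intro i his
    rw [← Finset.add_sum_erase s _ his]
    have h3 : ∑ j ∈ s.erase i, ∫ ω, (inner ℝ (Y i ω) (Y j ω) : ℝ) ∂ν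
        = ∑ j ∈ s.erase i, ‖g‖ ^ 2 := by
      refine Finset.sum_congr rfl fun j hj => ?_
      rw [Finset.mem_erase] at hj
      rw [ota_inner ν _ _ (hY i his) (hY j hj.2) (hi i his j hj.2 hj.1.symm), hg i his, hg j hj.2,
        real_inner_self_eq_norm_sq]
    rw [h3, Finset.sum_const, Finset.card_erase_of_mem his, nsmul_eq_mul,
      Nat.cast_sub (Finset.card_pos.2 ⟨i, his⟩)]
    have := hB i his
    simp_rw [real_inner_self_eq_norm_sq]
    push_cast
    linarith
  refine (Finset.sum_le_sum h2).trans ?_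
  rw [Finset.sum_const, nsmul_eq_mul]
  linarith

theorem ota_restr {Ω ι β γ γ' : Type*} [DecidableEq ι] {mΩ : MeasurableSpace Ω}
    [MeasurableSpace β] [MeasurableSpace γ] [MeasurableSpace γ']
    (ν : Measure Ω) (f : ι → Ω → β) (hf : ∀ i, Measurable (f i)) (hind : iIndepFun f ν) (b : β)
    (S T : Finset ι) (hST : Disjoint S T) (F : (ι → β) → γ) (G : (ι → β) → γ')
    (hF : Measurable F) (hG : Measurable G) :
    IndepFun (fun ω => F (fun p => if p ∈ S then f p ω else b))
      (fun ω => G (fun p => if p ∈ T then f p ω else b)) ν := by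
  have h := hind.indepFun_finset S T hST hf
  have hm : ∀ S : Finset ι, Measurable
      (fun (u : S → β) (p : ι) => if hp : p ∈ S then u ⟨p, hp⟩ else b) := by
    intro S
    refine measurable_pi_lambda _ fun p => ?_
    by_cases hp : p ∈ S
    · simp only [hp, dite_true]; exact measurable_pi_apply _
    · simp only [hp, dite_false]; exact measurable_const
  have h2 := h.comp (hF.comp (hm S)) (hG.comp (hm T))
  exact h2

theorem ota_moment {d N M : ℕ} (hN : 0 < N) (hM : 0 < M) {Ω : Type*} {mΩ : MeasurableSpace Ω}
    (ν : Measure Ω) [IsProbabilityMeasure ν]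
    (h : Fin N → Ω → ℝ) (X : Fin N → Fin M → Ω → EuclideanSpace ℝ (Fin d))
    (n : Ω → EuclideanSpace ℝ (Fin d))
    (hhm : ∀ i, Measurable (h i)) (hXm : ∀ i m, Measurable (X i m)) (hnm : Measurable n)
    (hh2 : ∀ i, MemLp (h i) 2 ν) (hX2 : ∀ i m, MemLp (X i m) 2 ν) (hn2 : MemLp n 2 ν)
    (hind : iIndepFun (otaFam h X n) ν)
    (m_h s W B : ℝ) (g : EuclideanSpace ℝ (Fin d))
    (hEh : ∀ i, ∫ ω, h i ω ∂ν = m_h) (hEh2 : ∀ i, ∫ ω, (h i ω) ^ 2 ∂ν = s)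
    (hEn : ∫ ω, n ω ∂ν = 0) (hVn : ∫ ω, ‖n ω‖ ^ 2 ∂ν ≤ B)
    (hEX : ∀ i m, ∫ ω, X i m ω ∂ν = g) (hVX : ∀ i m, ∫ ω, ‖X i m ω‖ ^ 2 ∂ν ≤ W) :
    MemLp (fun ω => (∑ i : Fin N, h i ω • ((1 / (M : ℝ)) • ∑ m : Fin M, X i m ω)) + n ω) 2 ν ∧
    ∫ ω, ((∑ i : Fin N, h i ω • ((1 / (M : ℝ)) • ∑ m : Fin M, X i m ω)) + n ω) ∂ν
      = ((N : ℝ) * m_h) • g ∧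
    ∫ ω, ‖(∑ i : Fin N, h i ω • ((1 / (M : ℝ)) • ∑ m : Fin M, X i m ω)) + n ω‖ ^ 2 ∂ν
      ≤ (N : ℝ) * s * (W / M + (M - 1) / M * ‖g‖ ^ 2) + N * (N - 1) * m_h ^ 2 * ‖g‖ ^ 2 + B := by
  classical
  have hM0 : (0 : ℝ) < M := by exact_mod_cast hM
  have hfm : ∀ p, Measurable (otaFam h X n p) := by
    rintro (i | ⟨i, m⟩ | u)
    · exact (hhm i).prodMk measurable_const
    · exact measurable_const.prodMk (hXm i m)
    · exact measurable_const.prodMk hnm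
  have hR := fun (γ γ' : Type) (_ : MeasurableSpace γ) (_ : MeasurableSpace γ') =>
    ota_restr (γ := γ) (γ' := γ') ν (otaFam h X n) hfm hind 0
  -- averages
  set A : Fin N → Ω → EuclideanSpace ℝ (Fin d) := fun i ω => (1 / (M : ℝ)) • ∑ m : Fin M, X i m ω
    with hA
  have hsum2 : ∀ i, MemLp (fun ω => ∑ m : Fin M, X i m ω) 2 ν := fun i =>
    memLp_finsetSum _ fun m _ => hX2 i m
  have hA2 : ∀ i, MemLp (A i) 2 ν := fun i => (hsum2 i).const_smul (1 / (M : ℝ))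
  have hAE : ∀ i, ∫ ω, A i ω ∂ν = g := by
    intro i
    simp only [hA]
    rw [integral_smul, integral_finsetSum _ (fun m _ => (hX2 i m).integrable one_le_two)]
    simp only [hEX, Finset.sum_const, Finset.card_univ, Fintype.card_fin]
    rw [← Nat.cast_smul_eq_nsmul ℝ, smul_smul, one_div, inv_mul_cancel₀ hM0.ne', one_smul]
  have hXX : ∀ i m m', m ≠ m' → IndepFun (X i m) (X i m') ν := by
    intro i m m' hmm
    have := hind.indepFun (i := Sum.inr (Sum.inl (i, m))) (j := Sum.inr (Sum.inl (i, m')))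
      (by simpa using hmm)
    exact this.comp measurable_snd measurable_snd
  have hAV : ∀ i, ∫ ω, ‖A i ω‖ ^ 2 ∂ν ≤ W / M + (M - 1) / M * ‖g‖ ^ 2 := by
    intro i
    have h1 := ota_sumsq ν Finset.univ (X i) (fun m _ => hX2 i m)
      (fun m _ m' _ hmm => hXX i m m' hmm) g (fun m _ => hEX i m) W (fun m _ => hVX i m)
    simp only [hA, norm_smul, mul_pow]
    rw [integral_const_mul]
    simp only [Finset.card_univ, Fintype.card_fin] at h1
    have h2 : ‖(1 / (M : ℝ))‖ ^ 2 = 1 / (M : ℝ) ^ 2 := by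
      rw [Real.norm_of_nonneg (by positivity)]; ring
    rw [h2]
    refine (mul_le_mul_of_nonneg_left h1 (by positivity)).trans (le_of_eq ?_)
    field_simp
  -- products
  set Y : Fin N → Ω → EuclideanSpace ℝ (Fin d) := fun i ω => h i ω • A i ω with hY
  set S : Fin N → Finset (Fin N ⊕ (Fin N × Fin M) ⊕ Unit) := fun i =>
    Finset.univ.image (fun m => Sum.inr (Sum.inl (i, m))) with hS
  have hhA : ∀ i, IndepFun (h i) (A i) ν := by
    intro i
    have := hR ℝ (EuclideanSpace ℝ (Fin d)) inferInstance inferInstance {Sum.inl i} (S i)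
      (by simp [hS]) (fun u => (u (Sum.inl i)).1)
      (fun u => (1 / (M : ℝ)) • ∑ m : Fin M, (u (Sum.inr (Sum.inl (i, m)))).2)
      (by fun_prop) (by fun_prop)
    simpa [hS, hY, hA, otaFam] using this
  have hYY : ∀ i j, i ≠ j → IndepFun (Y i) (Y j) ν := by
    intro i j hij
    have := hR (EuclideanSpace ℝ (Fin d)) (EuclideanSpace ℝ (Fin d)) inferInstance inferInstance
      (insert (Sum.inl i) (S i)) (insert (Sum.inl j) (S j))
      (by
        rw [Finset.disjoint_left]
        intro p hp hq
        simp only [hS, Finset.mem_insert, Finset.mem_image, Finset.mem_univ, true_and] at hp hq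
        rcases hp with rfl | ⟨m, rfl⟩ <;> simp [hij, hij.symm] at hq)
      (fun u => (u (Sum.inl i)).1 • (1 / (M : ℝ)) • ∑ m : Fin M, (u (Sum.inr (Sum.inl (i, m)))).2)
      (fun u => (u (Sum.inl j)).1 • (1 / (M : ℝ)) • ∑ m : Fin M, (u (Sum.inr (Sum.inl (j, m)))).2)
      (by fun_prop) (by fun_prop)
    simpa [hS, hY, hA, otaFam] using this
  have hYn : IndepFun (fun ω => ∑ i, Y i ω) n ν := by
    have := hR (EuclideanSpace ℝ (Fin d)) (EuclideanSpace ℝ (Fin d)) inferInstance inferInstance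
      (Finset.univ.erase (Sum.inr (Sum.inr ()))) {Sum.inr (Sum.inr ())}
      (by simp)
      (fun u => ∑ i, (u (Sum.inl i)).1 •
        (1 / (M : ℝ)) • ∑ m : Fin M, (u (Sum.inr (Sum.inl (i, m)))).2)
      (fun u => (u (Sum.inr (Sum.inr ()))).2)
      (by fun_prop) (by fun_prop)
    simpa [hY, hA, otaFam] using this
  have hsq : ∀ i, IndepFun (fun ω => h i ω ^ 2) (fun ω => ‖A i ω‖ ^ 2) ν := fun i =>
    (hhA i).comp (φ := fun x : ℝ => x ^ 2) (ψ := fun x : EuclideanSpace ℝ (Fin d) => ‖x‖ ^ 2)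
      (by fun_prop) (by fun_prop)
  have hYeq : ∀ i ω, ‖Y i ω‖ ^ 2 = h i ω ^ 2 * ‖A i ω‖ ^ 2 := by
    intro i ω
    simp only [hY, norm_smul, mul_pow, Real.norm_eq_abs, sq_abs]
  have hYm : ∀ i, Measurable (Y i) := fun i => by
    simp only [hY, hA]; fun_prop
  have hY2 : ∀ i, MemLp (Y i) 2 ν := by
    intro i
    rw [memLp_two_iff_integrable_sq_norm (hYm i).aestronglyMeasurable]
    simp only [hYeq]
    exact (hsq i).integrable_mul (hh2 i).integrable_sq (hA2 i).integrable_norm_pow'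
  have hYE : ∀ i, ∫ ω, Y i ω ∂ν = m_h • g := by
    intro i
    simp only [hY]
    rw [(hhA i).integral_fun_smul_eq_smul_integral (hh2 i).1 (hA2 i).1, hEh, hAE]
  have hs0 : 0 ≤ s := by
    rw [← hEh2 ⟨0, hN⟩]; exact integral_nonneg fun ω => sq_nonneg _
  have hYV : ∀ i, ∫ ω, ‖Y i ω‖ ^ 2 ∂ν ≤ s * (W / M + (M - 1) / M * ‖g‖ ^ 2) := by
    intro i
    simp only [hYeq]
    rw [(hsq i).integral_fun_mul_eq_mul_integral (hh2 i).integrable_sq.1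
      ((hA2 i).1.norm.pow 2), hEh2]
    exact mul_le_mul_of_nonneg_left (hAV i) hs0
  have hT2 : MemLp (fun ω => ∑ i, Y i ω) 2 ν := memLp_finsetSum _ fun i _ => hY2 i
  have hTE : ∫ ω, ∑ i, Y i ω ∂ν = ((N : ℝ) * m_h) • g := by
    rw [integral_finsetSum _ (fun i _ => (hY2 i).integrable one_le_two)]
    simp only [hYE, Finset.sum_const, Finset.card_univ, Fintype.card_fin]
    rw [← Nat.cast_smul_eq_nsmul ℝ, smul_smul]
  have hTV := ota_sumsq ν Finset.univ Y (fun i _ => hY2 i) (fun i _ j _ hij => hYY i j hij)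
    (m_h • g) (fun i _ => hYE i) _ (fun i _ => hYV i)
  refine ⟨hT2.add hn2, ?_, ?_⟩
  · change ∫ ω, (∑ i, Y i ω) + n ω ∂ν = _
    rw [integral_add (hT2.integrable one_le_two) (hn2.integrable one_le_two), hEn, add_zero, hTE]
  · change ∫ ω, ‖(∑ i, Y i ω) + n ω‖ ^ 2 ∂ν ≤ _
    have hcross := ota_inner ν _ _ hT2 hn2 hYn
    rw [hEn, inner_zero_right] at hcross
    simp only [norm_add_sq_real]
    have i1 : Integrable (fun ω => ‖∑ i, Y i ω‖ ^ 2) ν := hT2.integrable_norm_pow'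
    have i2 : Integrable (fun ω => 2 * (inner ℝ (∑ i, Y i ω) (n ω) : ℝ)) ν :=
      (ota_int_inner ν _ _ hT2 hn2).const_mul 2
    have i3 : Integrable (fun ω => ‖n ω‖ ^ 2) ν := hn2.integrable_norm_pow'
    have i12 : Integrable (fun ω => ‖∑ i, Y i ω‖ ^ 2
        + 2 * (inner ℝ (∑ i, Y i ω) (n ω) : ℝ)) ν := i1.add i2
    rw [integral_add i12 i3, integral_add i1 i2, integral_const_mul, hcross]
    simp only [Finset.card_univ, Fintype.card_fin, norm_smul, mul_pow, Real.norm_eq_abs,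
      sq_abs] at hTV
    nlinarith

theorem ota_const {Ω β F : Type*} {m mΩ : MeasurableSpace Ω} [StandardBorelSpace Ω]
    (μ : Measure Ω) [IsProbabilityMeasure μ] (hm : m ≤ mΩ)
    [MeasurableSpace β] [NormedAddCommGroup F] [NormedSpace ℝ F] [CompleteSpace F]
    (f : Ω → β) (hf : Measurable f) (hind : Indep (MeasurableSpace.comap f inferInstance) m μ)
    (φ : β → F) (hφ : StronglyMeasurable φ) (hint : Integrable (fun ω => φ (f ω)) μ) :
    ∀ᵐ ω ∂μ, ∫ y, φ (f y) ∂(condExpKernel μ m ω) = ∫ y, φ (f y) ∂μ := by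
  have h1 := condExp_ae_eq_integral_condExpKernel hm hint
  have h2 : μ[fun ω => φ (f ω) | m] =ᵐ[μ] fun _ => ∫ y, φ (f y) ∂μ :=
    condExp_indep_eq hf.comap_le hm
      (hφ.comp_measurable (comap_measurable f)) hind
  filter_upwards [h1, h2] with ω a b
  rw [← a, b]

theorem ota_step_meas {d N M : ℕ} (hN : 0 < N) (hM : 0 < M) {Ω : Type*}
    {m mΩ : MeasurableSpace Ω}
    [StandardBorelSpace Ω] (μ : Measure Ω) [IsProbabilityMeasure μ]
    (hm : m ≤ mΩ)
    (h : Fin N → Ω → ℝ) (X : Fin N → Fin M → Ω → EuclideanSpace ℝ (Fin d))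
    (n : Ω → EuclideanSpace ℝ (Fin d))
    (hhm : ∀ i, Measurable (h i)) (hXm : ∀ i m, Measurable (X i m)) (hnm : Measurable n)
    (hh2 : ∀ i, MemLp (h i) 2 μ) (hX2 : ∀ i m, MemLp (X i m) 2 μ) (hn2 : MemLp n 2 μ)
    (hind : iCondIndepFun m hm (otaFam h X n) μ)
    (hhind : ∀ i, Indep (MeasurableSpace.comap (h i) inferInstance) m μ)
    (hnind : Indep (MeasurableSpace.comap n inferInstance) m μ)
    (m_h s V B : ℝ) (g : Ω → EuclideanSpace ℝ (Fin d)) (hg : StronglyMeasurable[m] g)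
    (hEh : ∀ i, ∫ ω, h i ω ∂μ = m_h) (hEh2 : ∀ i, ∫ ω, (h i ω) ^ 2 ∂μ = s)
    (hEn : ∫ ω, n ω ∂μ = 0) (hVn : ∫ ω, ‖n ω‖ ^ 2 ∂μ ≤ B)
    (hEX : ∀ i j, μ[X i j | m] =ᵐ[μ] g)
    (hVX : ∀ i j, ∀ᵐ ω ∂μ, (μ[fun ω' => ‖X i j ω'‖ ^ 2 | m]) ω ≤ V ^ 2)
    (v : Ω → EuclideanSpace ℝ (Fin d))
    (hv : v = fun ω => (∑ i : Fin N, h i ω • ((1 / (M : ℝ)) • ∑ m : Fin M, X i m ω)) + n ω) :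
    MemLp g 2 μ ∧ MemLp v 2 μ ∧
    ∫ ω, (inner ℝ (g ω) (v ω) : ℝ) ∂μ = N * m_h * ∫ ω, ‖g ω‖ ^ 2 ∂μ ∧
    ∫ ω, ‖v ω‖ ^ 2 ∂μ
      ≤ (N : ℝ) * s * (V ^ 2 / M + (M - 1) / M * ∫ ω, ‖g ω‖ ^ 2 ∂μ)
        + N * (N - 1) * m_h ^ 2 * (∫ ω, ‖g ω‖ ^ 2 ∂μ) + B := by
  classical
  have hgL : MemLp g 2 μ := by
    have := (hX2 ⟨0, hN⟩ ⟨0, hM⟩).condExp (m := m) (by norm_num)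
    exact this.ae_eq (hEX _ _)
  have hgi : Integrable (fun ω => ‖g ω‖ ^ 2) μ := hgL.integrable_norm_pow'
  have hfm : ∀ p, Measurable (otaFam h X n p) := by
    rintro (i | ⟨i, m⟩ | u)
    · exact (hhm i).prodMk measurable_const
    · exact measurable_const.prodMk (hXm i m)
    · exact measurable_const.prodMk hnm
  have hvm : Measurable v := by rw [hv]; fun_prop
  have e0 : ∀ᵐ ω ∂μ, iIndepFun (otaFam h X n) (condExpKernel μ m ω) :=
    ae_of_ae_trim hm (ota_swap _ _ _ hfm hind)
  have e1 : ∀ᵐ ω ∂μ, ∀ i, MemLp (h i) 2 (condExpKernel μ m ω) := by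
    rw [ae_all_iff]; intro i
    filter_upwards [((hh2 i).integrable_sq).condExpKernel_ae (m := m)] with ω hω
    exact (memLp_two_iff_integrable_sq (hhm i).aestronglyMeasurable).2 hω
  have e2 : ∀ᵐ ω ∂μ, ∀ i j, MemLp (X i j) 2 (condExpKernel μ m ω) := by
    rw [ae_all_iff]; intro i
    rw [ae_all_iff]; intro j
    have : Integrable (fun ω => ‖X i j ω‖ ^ 2) μ := (hX2 i j).integrable_norm_pow'
    filter_upwards [this.condExpKernel_ae (m := m)] with ω hω
    exact (memLp_two_iff_integrable_sq_norm (hXm i j).aestronglyMeasurable).2 hω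
  have hni : Integrable (fun ω => ‖n ω‖ ^ 2) μ := hn2.integrable_norm_pow'
  have e3 : ∀ᵐ ω ∂μ, MemLp n 2 (condExpKernel μ m ω) := by
    filter_upwards [hni.condExpKernel_ae (m := m)] with ω hω
    exact (memLp_two_iff_integrable_sq_norm hnm.aestronglyMeasurable).2 hω
  have e4 : ∀ᵐ ω ∂μ, ∀ i, ∫ y, h i y ∂(condExpKernel μ m ω) = m_h := by
    rw [ae_all_iff]; intro i
    filter_upwards [ota_const μ hm (h i) (hhm i) (hhind i) (fun x => x)
      measurable_id.stronglyMeasurable ((hh2 i).integrable one_le_two)] with ω hω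
    rw [hω, hEh]
  have e5 : ∀ᵐ ω ∂μ, ∀ i, ∫ y, h i y ^ 2 ∂(condExpKernel μ m ω) = s := by
    rw [ae_all_iff]; intro i
    filter_upwards [ota_const μ hm (h i) (hhm i) (hhind i) (fun x => x ^ 2)
      (measurable_id.pow_const 2).stronglyMeasurable (hh2 i).integrable_sq] with ω hω
    rw [hω, hEh2]
  have e6 : ∀ᵐ ω ∂μ, ∫ y, n y ∂(condExpKernel μ m ω) = 0 := by
    filter_upwards [ota_const μ hm n hnm hnind (fun x => x)
      measurable_id.stronglyMeasurable (hn2.integrable one_le_two)] with ω hω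
    rw [hω, hEn]
  have e7 : ∀ᵐ ω ∂μ, ∫ y, ‖n y‖ ^ 2 ∂(condExpKernel μ m ω) ≤ B := by
    filter_upwards [ota_const μ hm n hnm hnind (fun x => ‖x‖ ^ 2)
      (measurable_norm.pow_const 2).stronglyMeasurable hni] with ω hω
    rw [hω]; exact hVn
  have e8 : ∀ᵐ ω ∂μ, ∀ i j, ∫ y, X i j y ∂(condExpKernel μ m ω) = g ω := by
    rw [ae_all_iff]; intro i
    rw [ae_all_iff]; intro j
    filter_upwards [condExp_ae_eq_integral_condExpKernel hm ((hX2 i j).integrable one_le_two),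
      hEX i j] with ω a b
    rw [← a, b]
  have e9 : ∀ᵐ ω ∂μ, ∀ i j, ∫ y, ‖X i j y‖ ^ 2 ∂(condExpKernel μ m ω) ≤ V ^ 2 := by
    rw [ae_all_iff]; intro i
    rw [ae_all_iff]; intro j
    have : Integrable (fun ω => ‖X i j ω‖ ^ 2) μ := (hX2 i j).integrable_norm_pow'
    filter_upwards [condExp_ae_eq_integral_condExpKernel hm this, hVX i j] with ω a b
    rw [← a]; exact b
  set R : Ω → ℝ := fun ω => (N : ℝ) * s * (V ^ 2 / M + (M - 1) / M * ‖g ω‖ ^ 2)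
    + N * (N - 1) * m_h ^ 2 * ‖g ω‖ ^ 2 + B with hR
  have key : ∀ᵐ ω ∂μ, MemLp v 2 (condExpKernel μ m ω) ∧
      ∫ y, v y ∂(condExpKernel μ m ω) = ((N : ℝ) * m_h) • g ω ∧
      ∫ y, ‖v y‖ ^ 2 ∂(condExpKernel μ m ω) ≤ R ω := by
    filter_upwards [e0, e1, e2, e3, e4, e5, e6, e7, e8, e9] with ω a0 a1 a2 a3 a4 a5 a6 a7 a8 a9
    rw [hv]
    exact ota_moment hN hM (condExpKernel μ m ω) h X n hhm hXm hnm a1 a2 a3 a0 m_h s (V ^ 2) B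
      (g ω) a4 a5 a6 a7 a8 a9
  have hRi : Integrable R μ := by
    have i1 : Integrable (fun ω => (N : ℝ) * s * (V ^ 2 / M + (M - 1) / M * ‖g ω‖ ^ 2)) μ :=
      ((integrable_const _).add (hgi.const_mul _)).const_mul _
    exact (i1.add (hgi.const_mul _)).add (integrable_const _)
  have hvsm : StronglyMeasurable (fun ω => ‖v ω‖ ^ 2) :=
    (hvm.norm.pow_const 2).stronglyMeasurable
  have hvi : Integrable (fun ω => ‖v ω‖ ^ 2) μ := by
    have hiff := Measure.integrable_comp_iff (μ := μ.trim hm) (κ := condExpKernel μ m)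
      (f := fun ω => ‖v ω‖ ^ 2) hvsm.aestronglyMeasurable
    rw [condExpKernel_comp_trim hm] at hiff
    refine hiff.2 ⟨?_, ?_⟩
    · have hms : MeasurableSet[m] {ω | Integrable (fun ω => ‖v ω‖ ^ 2) (condExpKernel μ m ω)} :=
        measurableSet_integrable hvsm
      rw [ae_iff]
      have h1 := trim_measurableSet_eq (μ := μ) hm hms.compl
      refine h1.trans ?_
      have h2 : ∀ᵐ ω ∂μ, Integrable (fun ω => ‖v ω‖ ^ 2) (condExpKernel μ m ω) := by
        filter_upwards [key] with ω hω
        exact hω.1.integrable_norm_pow'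
      exact ae_iff.1 h2
    · have hsm : StronglyMeasurable[m] (fun x => ∫ y, ‖(‖v y‖ ^ 2)‖ ∂(condExpKernel μ m x)) :=
        StronglyMeasurable.integral_condExpKernel hvsm.norm
      refine Integrable.trim hm ?_ hsm
      refine hRi.mono' (hsm.mono hm).aestronglyMeasurable ?_
      filter_upwards [key] with ω hω
      rw [Real.norm_of_nonneg (integral_nonneg fun _ => norm_nonneg _)]
      simpa using hω.2.2
  have hvL : MemLp v 2 μ := (memLp_two_iff_integrable_sq_norm hvm.aestronglyMeasurable).2 hvi
  refine ⟨hgL, hvL, ?_, ?_⟩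
  · have h1 := condExp_bilin_of_stronglyMeasurable_left (μ := μ) (innerSL ℝ) hg
      (ota_int_inner μ g v hgL hvL) (hvL.integrable one_le_two)
    rw [← integral_condExp hm, ← integral_const_mul]
    refine integral_congr_ae ?_
    filter_upwards [h1, key,
      condExp_ae_eq_integral_condExpKernel hm (hvL.integrable one_le_two)] with ω a b c
    have a' : (μ[fun ω => (inner ℝ (g ω) (v ω) : ℝ) | m]) ω = inner ℝ (g ω) ((μ[v | m]) ω) := a
    rw [a', c, b.2.1, inner_smul_right, real_inner_self_eq_norm_sq]
  · have h2 : ∫ ω, R ω ∂μ = (N : ℝ) * s * (V ^ 2 / M + (M - 1) / M * ∫ ω, ‖g ω‖ ^ 2 ∂μ)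
        + N * (N - 1) * m_h ^ 2 * (∫ ω, ‖g ω‖ ^ 2 ∂μ) + B := by
      have i0 : Integrable (fun ω => V ^ 2 / M + ((M : ℝ) - 1) / M * ‖g ω‖ ^ 2) μ :=
        (integrable_const _).add (hgi.const_mul _)
      have i1 : Integrable (fun ω => (N : ℝ) * s * (V ^ 2 / M + (M - 1) / M * ‖g ω‖ ^ 2)) μ :=
        i0.const_mul _
      have i2 : Integrable (fun ω => N * (N - 1) * m_h ^ 2 * ‖g ω‖ ^ 2) μ := hgi.const_mul _
      simp only [hR]
      have i12 : Integrable (fun ω => (N : ℝ) * s * (V ^ 2 / M + (M - 1) / M * ‖g ω‖ ^ 2)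
          + N * (N - 1) * m_h ^ 2 * ‖g ω‖ ^ 2) μ := i1.add i2
      rw [integral_add i12 (integrable_const _), integral_add i1 i2, integral_const_mul,
        integral_const_mul, integral_add (integrable_const _) (hgi.const_mul _),
        integral_const_mul]
      simp
    rw [← h2, ← integral_condExp hm]
    refine integral_mono_ae integrable_condExp hRi ?_
    filter_upwards [key, condExp_ae_eq_integral_condExpKernel hm hvi] with ω a b
    rw [b]; exact a.2.2

theorem ota_indep_congr {Ω β : Type*} {m mΩ : MeasurableSpace Ω} (μ : Measure Ω)
    [MeasurableSpace β] (f f' : Ω → β) (hff : f =ᵐ[μ] f')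
    (hind : Indep (MeasurableSpace.comap f inferInstance) m μ) :
    Indep (MeasurableSpace.comap f' inferInstance) m μ := by
  rw [Indep_iff] at hind ⊢
  rintro _ t ⟨s, hs, rfl⟩ ht
  have h1 := hind (f ⁻¹' s) t ⟨s, hs, rfl⟩ ht
  have h2 : (f ⁻¹' s : Set Ω) =ᵐ[μ] (f' ⁻¹' s : Set Ω) := by
    filter_upwards [hff] with ω hω
    change (f ω ∈ s) = (f' ω ∈ s)
    rw [hω]
  rw [measure_congr h2] at h1
  rw [← h1]
  exact measure_congr (h2.symm.inter (Filter.EventuallyEq.refl _ _))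

theorem ota_step {d N M : ℕ} (hN : 0 < N) (hM : 0 < M) {Ω : Type*}
    {m mΩ : MeasurableSpace Ω}
    [StandardBorelSpace Ω] (μ : Measure Ω) [IsProbabilityMeasure μ]
    (hm : m ≤ mΩ)
    (h : Fin N → Ω → ℝ) (X : Fin N → Fin M → Ω → EuclideanSpace ℝ (Fin d))
    (n : Ω → EuclideanSpace ℝ (Fin d))
    (hh2 : ∀ i, MemLp (h i) 2 μ) (hX2 : ∀ i m, MemLp (X i m) 2 μ) (hn2 : MemLp n 2 μ)
    (hind : iCondIndepFun m hm (otaFam h X n) μ)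
    (hhind : ∀ i, Indep (MeasurableSpace.comap (h i) inferInstance) m μ)
    (hnind : Indep (MeasurableSpace.comap n inferInstance) m μ)
    (m_h s V B : ℝ) (g : Ω → EuclideanSpace ℝ (Fin d)) (hg : StronglyMeasurable[m] g)
    (hEh : ∀ i, ∫ ω, h i ω ∂μ = m_h) (hEh2 : ∀ i, ∫ ω, (h i ω) ^ 2 ∂μ = s)
    (hEn : ∫ ω, n ω ∂μ = 0) (hVn : ∫ ω, ‖n ω‖ ^ 2 ∂μ ≤ B)
    (hEX : ∀ i j, μ[X i j | m] =ᵐ[μ] g)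
    (hVX : ∀ i j, ∀ᵐ ω ∂μ, (μ[fun ω' => ‖X i j ω'‖ ^ 2 | m]) ω ≤ V ^ 2)
    (v : Ω → EuclideanSpace ℝ (Fin d))
    (hv : v = fun ω => (∑ i : Fin N, h i ω • ((1 / (M : ℝ)) • ∑ m : Fin M, X i m ω)) + n ω) :
    MemLp g 2 μ ∧ MemLp v 2 μ ∧
    ∫ ω, (inner ℝ (g ω) (v ω) : ℝ) ∂μ = N * m_h * ∫ ω, ‖g ω‖ ^ 2 ∂μ ∧
    ∫ ω, ‖v ω‖ ^ 2 ∂μ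
      ≤ (N : ℝ) * s * (V ^ 2 / M + (M - 1) / M * ∫ ω, ‖g ω‖ ^ 2 ∂μ)
        + N * (N - 1) * m_h ^ 2 * (∫ ω, ‖g ω‖ ^ 2 ∂μ) + B := by
  have hh' : ∀ i, ∃ f, Measurable f ∧ h i =ᵐ[μ] f := fun i => (hh2 i).1.aemeasurable
  have hX' : ∀ i j, ∃ f, Measurable f ∧ X i j =ᵐ[μ] f := fun i j => (hX2 i j).1.aemeasurable
  have hn' : ∃ f, Measurable f ∧ n =ᵐ[μ] f := hn2.1.aemeasurable
  choose h' hhm hhe using hh'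
  choose X' hXm hXe using hX'
  obtain ⟨n', hnm, hne⟩ := hn'
  have hfe : ∀ p, otaFam h X n p =ᵐ[μ] otaFam h' X' n' p := by
    rintro (i | ⟨i, j⟩ | u)
    · filter_upwards [hhe i] with ω hω
      simp [otaFam, hω]
    · filter_upwards [hXe i j] with ω hω
      simp [otaFam, hω]
    · filter_upwards [hne] with ω hω
      simp [otaFam, hω]
  have hind' : iCondIndepFun m hm (otaFam h' X' n') μ := by
    refine Kernel.iIndepFun.congr' hind fun p => ?_
    have := hfe p
    rw [← condExpKernel_comp_trim (μ := μ) hm] at this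
    exact Measure.ae_ae_of_ae_comp this
  have hve : v =ᵐ[μ] fun ω =>
      (∑ i : Fin N, h' i ω • ((1 / (M : ℝ)) • ∑ m : Fin M, X' i m ω)) + n' ω := by
    have a1 := ae_all_iff.2 hhe
    have a2 := ae_all_iff.2 fun i => ae_all_iff.2 (hXe i)
    filter_upwards [a1, a2, hne] with ω b1 b2 b3
    simp only [hv, b1, b2, b3]
  have main := ota_step_meas hN hM μ hm h' X' n' hhm hXm hnm (fun i => (hh2 i).ae_eq (hhe i))
    (fun i j => (hX2 i j).ae_eq (hXe i j)) (hn2.ae_eq hne) hind'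
    (fun i => ota_indep_congr μ _ _ (hhe i) (hhind i)) (ota_indep_congr μ _ _ hne hnind)
    m_h s V B g hg
    (fun i => by rw [← hEh i]; exact integral_congr_ae (hhe i).symm)
    (fun i => by
      rw [← hEh2 i]; refine integral_congr_ae ?_
      filter_upwards [hhe i] with ω hω; rw [hω])
    (by rw [← hEn]; exact integral_congr_ae hne.symm)
    (by
      refine le_trans (le_of_eq (integral_congr_ae ?_)) hVn
      filter_upwards [hne] with ω hω; rw [hω])
    (fun i j => (condExp_congr_ae (hXe i j).symm).trans (hEX i j))
    (fun i j => by
      have : (fun ω' => ‖X' i j ω'‖ ^ 2) =ᵐ[μ] (fun ω' => ‖X i j ω'‖ ^ 2) := by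
        filter_upwards [hXe i j] with ω hω; rw [hω]
      filter_upwards [condExp_congr_ae (m := m) this, hVX i j] with ω a b
      rw [a]; exact b)
    _ rfl
  obtain ⟨c1, c2, c3, c4⟩ := main
  refine ⟨c1, c2.ae_eq hve.symm, ?_, ?_⟩
  · rw [← c3]
    refine integral_congr_ae ?_
    filter_upwards [hve] with ω hω; rw [hω]
  · refine le_trans (le_of_eq (integral_congr_ae ?_)) c4
    filter_upwards [hve] with ω hω; rw [hω]

/-- Corollary 1 of the paper: finding an ε-approximate stationary point.
If `σ_h² ≤ (N+1) m_h²`, `0 < α ≤ 1/(m_h L)`, `Λ = M(N+1)m_h² - (M-1)σ_h²`, `ε > 0`,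
`3 σ_h² V² ≤ Λ ε`, `3 M σ̄² ≤ N Λ ε` and `K ≥ max(1, 6 M N m_h (J(θ⁰) - J*)/(α Λ ε))`,
then `(1/K) Σ_{k<K} E[‖∇J(θ^k)‖²] ≤ ε`. -/
theorem overTheAir_epsilon_stationary
    {d : ℕ} (hd : 1 ≤ d) {N M : ℕ} (hN : 0 < N) (hM : 0 < M)
    {Ω : Type*} [mΩ : MeasurableSpace Ω] [StandardBorelSpace Ω] [Nonempty Ω]
    (μ : Measure Ω) [IsProbabilityMeasure μ]
    (m_h σ_h2 V σbar2 α L : ℝ)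
    (hm : 0 < m_h) (hσh : 0 ≤ σ_h2) (hV : 0 ≤ V) (hσbar : 0 ≤ σbar2)
    (hL : 0 < L) (hα : 0 < α) (hαL : α ≤ 1 / (m_h * L))
    (J : EuclideanSpace ℝ (Fin d) → ℝ) (hJ : Differentiable ℝ J)
    (hLip : ∀ x y : EuclideanSpace ℝ (Fin d),
      ‖gradient J x - gradient J y‖ ≤ L * ‖x - y‖)
    (Jstar : ℝ) (hJstar : IsGLB (Set.range J) Jstar)
    (𝓕 : Filtration ℕ mΩ)
    (h : ℕ → Fin N → Ω → ℝ)
    (X : ℕ → Fin N → Fin M → Ω → EuclideanSpace ℝ (Fin d))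
    (n : ℕ → Ω → EuclideanSpace ℝ (Fin d))
    (θ : ℕ → Ω → EuclideanSpace ℝ (Fin d))
    (θ0 : EuclideanSpace ℝ (Fin d)) (hθ0 : θ 0 = fun _ => θ0)
    (v : ℕ → Ω → EuclideanSpace ℝ (Fin d))
    (hv : ∀ k, v k = fun ω =>
      (∑ i : Fin N, h k i ω • ((1 / (M : ℝ)) • ∑ m : Fin M, X k i m ω)) + n k ω)
    (hθ : ∀ k, θ (k + 1) = fun ω => θ k ω - (α / (N : ℝ)) • v k ω)
    (hθmeas : ∀ k, Measurable[𝓕 k] (θ k))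
    (hh2 : ∀ k i, MemLp (h k i) 2 μ)
    (hX2 : ∀ k i m, MemLp (X k i m) 2 μ)
    (hn2 : ∀ k, MemLp (n k) 2 μ)
    (hcondind : ∀ k, iCondIndepFun (𝓕 k) (𝓕.le k)
      (otaFam (h k) (X k) (n k)) μ)
    (hhind : ∀ k i, Indep (MeasurableSpace.comap (h k i) inferInstance) (𝓕 k) μ)
    (hnind : ∀ k, Indep (MeasurableSpace.comap (n k) inferInstance) (𝓕 k) μ)
    (hEh : ∀ k i, ∫ ω, h k i ω ∂μ = m_h)
    (hEh2 : ∀ k i, ∫ ω, (h k i ω) ^ 2 ∂μ = σ_h2)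
    (hEn : ∀ k, ∫ ω, n k ω ∂μ = 0)
    (hVn : ∀ k, ∫ ω, ‖n k ω‖ ^ 2 ∂μ ≤ σbar2)
    (hEX : ∀ k i m, μ[X k i m | 𝓕 k] =ᵐ[μ] fun ω => gradient J (θ k ω))
    (hVX : ∀ k i m, ∀ᵐ ω ∂μ, (μ[fun ω' => ‖X k i m ω'‖ ^ 2 | 𝓕 k]) ω ≤ V ^ 2)
    (hchan : σ_h2 ≤ ((N : ℝ) + 1) * m_h ^ 2)
    (Λ : ℝ) (hΛ : Λ = (M : ℝ) * ((N : ℝ) + 1) * m_h ^ 2 - ((M : ℝ) - 1) * σ_h2)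
    (ε : ℝ) (hε : 0 < ε)
    (hεV : 3 * σ_h2 * V ^ 2 ≤ Λ * ε)
    (hεn : 3 * (M : ℝ) * σbar2 ≤ (N : ℝ) * Λ * ε)
    (K : ℕ) (hK1 : 1 ≤ K)
    (hK : 6 * (M : ℝ) * (N : ℝ) * m_h * (J θ0 - Jstar) / (α * Λ * ε) ≤ (K : ℝ)) :
    (1 / (K : ℝ)) * ∑ k ∈ Finset.range K, ∫ ω, ‖gradient J (θ k ω)‖ ^ 2 ∂μ ≤ ε := by
  have hN0 : (1 : ℝ) ≤ N := by exact_mod_cast hN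
  have hM0 : (1 : ℝ) ≤ M := by exact_mod_cast hM
  have hNp : (0 : ℝ) < N := by linarith
  have hMp : (0 : ℝ) < M := by linarith
  have hK0 : (0 : ℝ) < K := by exact_mod_cast hK1
  have hΛp : 0 < Λ := by
    have h1 : 0 < ((N : ℝ) + 1) * m_h ^ 2 := by positivity
    have h2 := mul_le_mul_of_nonneg_left hchan (by linarith : (0 : ℝ) ≤ (M : ℝ) - 1)
    rw [hΛ]; nlinarith
  have hαL' : α * L ≤ 1 / m_h := by
    have := mul_le_mul_of_nonneg_right hαL hL.le
    refine this.trans (le_of_eq ?_)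
    field_simp
  have hgc : Continuous (gradient J) := by
    have : LipschitzWith ⟨L, hL.le⟩ (gradient J) :=
      LipschitzWith.of_dist_le_mul fun x y => by
        rw [dist_eq_norm, dist_eq_norm]; exact hLip x y
    exact this.continuous
  have step := fun k => ota_step hN hM μ (𝓕.le k) (h k) (X k) (n k) (hh2 k) (hX2 k) (hn2 k)
    (hcondind k) (hhind k) (hnind k) m_h σ_h2 V σbar2 (fun ω => gradient J (θ k ω))
    (hgc.measurable.comp (hθmeas k)).stronglyMeasurable (hEh k) (hEh2 k) (hEn k) (hVn k)
    (hEX k) (hVX k) (v k) (hv k)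
  have hlow : ∀ x, Jstar ≤ J x := fun x => hJstar.1 ⟨x, rfl⟩
  have hdesc : ∀ k ω, J (θ (k + 1) ω) ≤ J (θ k ω)
      - (α / N) * inner ℝ (gradient J (θ k ω)) (v k ω)
      + L / 2 * (α / N) ^ 2 * ‖v k ω‖ ^ 2 := by
    intro k ω
    have h1 := ota_descent J hJ L hLip (θ k ω) (-((α / (N : ℝ)) • v k ω))
    rw [← sub_eq_add_neg, inner_neg_right, inner_smul_right, norm_neg, norm_smul, mul_pow,
      Real.norm_eq_abs, sq_abs] at h1
    rw [hθ k]
    simp only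
    linarith
  have hvi : ∀ k, Integrable (fun ω => ‖v k ω‖ ^ 2) μ := fun k =>
    (step k).2.1.integrable_norm_pow'
  have hii : ∀ k, Integrable (fun ω => (inner ℝ (gradient J (θ k ω)) (v k ω) : ℝ)) μ := fun k =>
    ota_int_inner μ _ _ (step k).1 (step k).2.1
  have hJi : ∀ k, Integrable (fun ω => J (θ k ω)) μ := by
    intro k
    induction k with
    | zero => simp only [hθ0]; exact integrable_const _
    | succ k ih =>
      have hub := (ih.sub ((hii k).const_mul (α / N))).add
        ((hvi k).const_mul (L / 2 * (α / N) ^ 2))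
      refine integrable_of_le_of_le (g₁ := fun _ => Jstar) ?_
        (Filter.Eventually.of_forall fun ω => hlow _)
        (Filter.Eventually.of_forall fun ω => hdesc k ω) (integrable_const _) hub
      exact (hJ.continuous.measurable.comp
        ((hθmeas (k + 1)).mono (𝓕.le (k + 1)) le_rfl)).aestronglyMeasurable
  set G : ℕ → ℝ := fun k => ∫ ω, ‖gradient J (θ k ω)‖ ^ 2 ∂μ with hG
  set a : ℕ → ℝ := fun k => ∫ ω, J (θ k ω) ∂μ with ha
  have hrec : ∀ k, α * Λ / (2 * m_h * N * M) * G k ≤ a k - a (k + 1)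
      + α / (2 * m_h * N ^ 2) * (N * σ_h2 * V ^ 2 / M + σbar2) := by
    intro k
    have i1 : Integrable (fun ω => (α / N) * (inner ℝ (gradient J (θ k ω)) (v k ω) : ℝ)) μ :=
      (hii k).const_mul _
    have i2 : Integrable (fun ω => L / 2 * (α / N) ^ 2 * ‖v k ω‖ ^ 2) μ := (hvi k).const_mul _
    have i3 : Integrable (fun ω => J (θ k ω)
      - (α / N) * (inner ℝ (gradient J (θ k ω)) (v k ω) : ℝ)) μ := (hJi k).sub i1
    have h1 : a (k + 1) ≤ ∫ ω, (J (θ k ω)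
        - (α / N) * inner ℝ (gradient J (θ k ω)) (v k ω)
        + L / 2 * (α / N) ^ 2 * ‖v k ω‖ ^ 2) ∂μ :=
      integral_mono (hJi (k + 1)) (i3.add i2) (hdesc k)
    rw [integral_add i3 i2, integral_sub (hJi k) i1, integral_const_mul, integral_const_mul,
      (step k).2.2.1] at h1
    change a (k + 1) ≤ a k - α / N * (N * m_h * G k)
      + L / 2 * (α / N) ^ 2 * ∫ ω, ‖v k ω‖ ^ 2 ∂μ at h1
    have h2 : ∫ ω, ‖v k ω‖ ^ 2 ∂μ ≤ (N : ℝ) * σ_h2 * (V ^ 2 / M + (M - 1) / M * G k)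
        + N * (N - 1) * m_h ^ 2 * G k + σbar2 := (step k).2.2.2
    have h3 : L / 2 * (α / N) ^ 2 ≤ α / (2 * m_h * N ^ 2) := by
      have e1 : L / 2 * (α / N) ^ 2 = α / (2 * N ^ 2) * (α * L) := by field_simp
      have e2 : α / (2 * m_h * N ^ 2) = α / (2 * N ^ 2) * (1 / m_h) := by field_simp
      rw [e1, e2]
      exact mul_le_mul_of_nonneg_left hαL' (by positivity)
    have h4 : 0 ≤ ∫ ω, ‖v k ω‖ ^ 2 ∂μ := integral_nonneg fun ω => sq_nonneg _
    have h5 := (mul_le_mul_of_nonneg_right h3 h4).trans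
      (mul_le_mul_of_nonneg_left h2 (by positivity : 0 ≤ α / (2 * m_h * (N : ℝ) ^ 2)))
    have h6 : α * Λ / (2 * m_h * N * M) * G k = α / N * (N * m_h * G k)
        - α / (2 * m_h * N ^ 2) * ((N : ℝ) * σ_h2 * (V ^ 2 / M + (M - 1) / M * G k)
        + N * (N - 1) * m_h ^ 2 * G k + σbar2)
        + α / (2 * m_h * N ^ 2) * (N * σ_h2 * V ^ 2 / M + σbar2) := by
      rw [hΛ]; field_simp; ring
    linarith
  have hsum : ∀ k : ℕ, α * Λ / (2 * m_h * N * M) * ∑ j ∈ Finset.range k, G j ≤ a 0 - a k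
      + k * (α / (2 * m_h * N ^ 2) * (N * σ_h2 * V ^ 2 / M + σbar2)) := by
    intro k
    induction k with
    | zero => simp
    | succ k ih =>
      rw [Finset.sum_range_succ, mul_add]
      have := hrec k
      push_cast
      linarith
  have ha0 : a 0 = J θ0 := by simp [ha, hθ0]
  have haK : Jstar ≤ a K := by
    have := integral_mono (integrable_const Jstar) (hJi K) (fun ω => hlow (θ K ω))
    simpa using this
  have hS := hsum K
  rw [ha0] at hS
  rw [div_le_iff₀ (by positivity)] at hK
  change 1 / (K : ℝ) * ∑ k ∈ Finset.range K, G k ≤ ε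
  set T := ∑ j ∈ Finset.range K, G j with hT
  have hT1 : α * Λ / (2 * m_h * N * M) * T ≤ (J θ0 - Jstar)
      + K * (α / (2 * m_h * N ^ 2) * (N * σ_h2 * V ^ 2 / M + σbar2)) := by linarith
  have hc : (0 : ℝ) < 6 * m_h * N * M := by positivity
  have hT2 := mul_le_mul_of_nonneg_left hT1 hc.le
  have e1 : 6 * m_h * N * M * (α * Λ / (2 * m_h * N * M) * T) = 3 * (α * Λ * T) := by
    field_simp; ring
  have e2 : 6 * m_h * N * M * ((J θ0 - Jstar)
      + K * (α / (2 * m_h * N ^ 2) * (N * σ_h2 * V ^ 2 / M + σbar2)))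
      = 6 * M * N * m_h * (J θ0 - Jstar) + K * α * (3 * σ_h2 * V ^ 2)
        + K * α / N * (3 * M * σbar2) := by
    field_simp; ring
  rw [e1, e2] at hT2
  have b1 := mul_le_mul_of_nonneg_left hεV (by positivity : 0 ≤ (K : ℝ) * α)
  have b2 := mul_le_mul_of_nonneg_left hεn (by positivity : 0 ≤ (K : ℝ) * α / N)
  have e3 : (K : ℝ) * α / N * (N * Λ * ε) = K * α * (Λ * ε) := by field_simp
  rw [e3] at b2
  have hfin : α * Λ * T ≤ α * Λ * (K * ε) := by linarith
  have hTK : T ≤ K * ε := le_of_mul_le_mul_left hfin (by positivity)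
  rw [one_div, inv_mul_le_iff₀ hK0]
  exact hTK
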